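/- Let Θ be a nonempty compact metric space, let ψ : Θ → ℝ^d be continuous, let ℓ : ℝ^d → ℝ be convex and differentiable, let y ∈ ℝ^d, and let τ > 0. Set K = τ·conv(ψ(Θ) ∪ {0}) and let C ≥ 0 be a curvature bound for f(x) = ℓ(x − y) on K, i.e. for all x, s ∈ K and γ ∈ [0,1], f(x + γ(s − x)) ≤ f(x) + γ⟨∇f(x), s − x⟩ + (γ²/2)C. Let ℓ⋆ be the minimum of ℓ(Φμ − y) over all finite nonnegative Borel measures μ on Θ with μ(Θ) ≤ τ, and let ζ ≥ 0. Suppose (μ_k)_{k≥0} are finite nonnegative Borel measures on Θ with μ_k(Θ) ≤ τ, and (s_k)_{k≥0} are points of K such that for every k ≥ 0, with g_k = ∇ℓ(Φμ_k − y): (i) ⟨s_k, g_k⟩ ≤ min_{s∈K} ⟨s, g_k⟩ + Cζ/(k+2), and (ii) ℓ(Φμ_{k+1} − y) ≤ f((k/(k+2))·Φμ_k + (2/(k+2))·s_k). Then for every k ≥ 1, ℓ(Φμ_k − y) − ℓ⋆ ≤ 2C(1+ζ)/(k+2). -/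

import Mathlib

open MeasureTheory Pointwise RealInnerProductSpace

/-!
This is the standard conditional-gradient argument. Writing `h k` for the optimality gap, the
curvature bound with step `2 / (k + 2)`, the approximate minimality of `s k` tested against an
optimal point, and the gradient inequality for the convex function `ℓ` give
`h (k + 1) ≤ k / (k + 2) * h k + 2 * C * (1 + ζ) / (k + 2) ^ 2`,
from which the rate follows by induction; the first step forgets `h 0` because its
coefficient vanishes.

All these inequalities are tested at points of `K`, so the points `∫ ψ ∂μ` with `μ` of mass at most
`τ` must lie in `K` itself, not merely in its closure (`integral_mem_smul_convexHull`).
This holds because in finite dimension the convex hull of a compact set is compact, a consequence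
of Carathéodory's theorem (`isCompact_convexHull_of_finiteDimensional`).
-/

/-- By Carathéodory's theorem the hull is the image of the compact set
`stdSimplex × S ^ (n + 1)`, where `n` is the dimension, under the map sending weights and points to
the corresponding convex combination. -/
lemma isCompact_convexHull_of_finiteDimensional {E : Type*} [NormedAddCommGroup E]
    [NormedSpace ℝ E] [FiniteDimensional ℝ E] {S : Set E} (hS : IsCompact S) :
    IsCompact (convexHull ℝ S) := by
  rcases S.eq_empty_or_nonempty with rfl | ⟨s₀, hs₀⟩
  · simp
  let n := Module.finrank ℝ E + 1
  let F : (Fin n → ℝ) × (Fin n → E) → E := fun p => ∑ i, p.1 i • p.2 i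
  have hF : Continuous F := by fun_prop
  have hcomp : IsCompact (stdSimplex ℝ (Fin n) ×ˢ Set.univ.pi (fun _ : Fin n => S)) :=
    (isCompact_stdSimplex ℝ (Fin n)).prod (isCompact_univ_pi fun _ => hS)
  convert hcomp.image hF using 1
  apply Set.Subset.antisymm
  · intro x hx
    obtain ⟨ι, _, z, w, hz, hind, hw, hw1, rfl⟩ := eq_pos_convex_span_of_mem_convexHull hx
    have hcard : Fintype.card ι ≤ Fintype.card (Fin n) := by
      rw [Fintype.card_fin]
      exact hind.card_le_finrank_succ.trans
        (Nat.succ_le_succ (Submodule.finrank_le _))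
    obtain ⟨e⟩ := Function.Embedding.nonempty_of_card_le hcard
    -- Unused indices receive weight zero and the arbitrary point `s₀`.
    refine ⟨(Function.extend e w 0, Function.extend e z fun _ => s₀), ⟨⟨?_, ?_⟩, ?_⟩, ?_⟩
    · intro i
      by_cases hi : ∃ j, e j = i
      · obtain ⟨j, rfl⟩ := hi
        simpa [e.injective.extend_apply] using (hw j).le
      · simp [Function.extend_apply' _ _ _ hi]
    · rw [← hw1]
      refine (Fintype.sum_of_injective e e.injective _ _ ?_ ?_).symm
      · intro i hi
        simp [Function.extend_apply' _ _ _ hi]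
      · intro i
        simp [e.injective.extend_apply]
    · intro i _
      by_cases hi : ∃ j, e j = i
      · obtain ⟨j, rfl⟩ := hi
        simpa [e.injective.extend_apply] using hz ⟨j, rfl⟩
      · simpa [Function.extend_apply' _ _ _ hi] using hs₀
    · refine (Fintype.sum_of_injective e e.injective _ _ ?_ ?_).symm
      · intro i hi
        simp [Function.extend_apply' _ _ _ hi]
      · intro i
        simp [e.injective.extend_apply]
  · rintro _ ⟨⟨w, z⟩, ⟨⟨hw, hw1⟩, hz⟩, rfl⟩
    exact (convex_convexHull ℝ S).sum_mem (fun i _ => hw i) hw1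
      fun i _ => subset_convexHull ℝ S (hz i trivial)

/-- The average of `ψ` lies in the closed convex hull; the missing mass `τ - μ(Θ)` is put on
the vertex `0`. -/
lemma integral_mem_smul_convexHull {Θ E : Type*} [TopologicalSpace Θ] [CompactSpace Θ]
    [MeasurableSpace Θ] [BorelSpace Θ] [NormedAddCommGroup E] [NormedSpace ℝ E]
    [FiniteDimensional ℝ E] {ψ : Θ → E} (hψ : Continuous ψ) {τ : ℝ} (hτ : 0 < τ)
    (μ : Measure Θ) [IsFiniteMeasure μ] (hμ : μ Set.univ ≤ ENNReal.ofReal τ) :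
    ∫ θ, ψ θ ∂μ ∈ τ • convexHull ℝ (Set.range ψ ∪ {0}) := by
  have h0 : (0 : E) ∈ convexHull ℝ (Set.range ψ ∪ {0}) := subset_convexHull ℝ _ (by simp)
  rcases eq_or_ne μ 0 with rfl | hne
  · exact ⟨0, h0, by simp⟩
  have : NeZero μ := ⟨hne⟩
  have hclosed : IsClosed (convexHull ℝ (Set.range ψ ∪ {0})) :=
    (isCompact_convexHull_of_finiteDimensional
      ((isCompact_range hψ).union isCompact_singleton)).isClosed
  have hint : Integrable ψ μ :=
    hψ.integrable_of_hasCompactSupport (HasCompactSupport.of_compactSpace ψ)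
  have havg : (⨍ θ, ψ θ ∂μ) ∈ convexHull ℝ (Set.range ψ ∪ {0}) :=
    (convex_convexHull ℝ _).average_mem hclosed
      (.of_forall fun θ => subset_convexHull ℝ _ (.inl ⟨θ, rfl⟩)) hint
  have hmass : μ.real Set.univ ≤ τ := ENNReal.toReal_le_of_le_ofReal hτ.le hμ
  refine ⟨(μ.real Set.univ / τ) • ⨍ θ, ψ θ ∂μ, ?_, ?_⟩
  · exact (convex_convexHull ℝ _).smul_mem_of_zero_mem h0 havg
      ⟨by positivity, (div_le_one hτ).2 hmass⟩
  · simp only [smul_smul]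
    rw [mul_div_cancel₀ _ hτ.ne', measure_smul_average]

lemma ConvexOn.add_inner_gradient_le {E : Type*} [NormedAddCommGroup E] [InnerProductSpace ℝ E]
    [CompleteSpace E] {f : E → ℝ} (hf : ConvexOn ℝ Set.univ f) {a : E}
    (hd : DifferentiableAt ℝ f a) (b : E) : f a + ⟪gradient f a, b - a⟫ ≤ f b := by
  have hline : ConvexOn ℝ Set.univ (f ∘ AffineMap.lineMap (k := ℝ) a b) := by
    simpa using hf.comp_affineMap (AffineMap.lineMap (k := ℝ) a b)
  have hder : HasDerivAt (f ∘ AffineMap.lineMap (k := ℝ) a b) (fderiv ℝ f a (b - a)) 0 := by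
    refine HasFDerivAt.comp_hasDerivAt (0 : ℝ) ?_ AffineMap.hasDerivAt_lineMap
    simpa using hd.hasFDerivAt
  have h := hline.le_slope_of_hasDerivAt (Set.mem_univ _) (Set.mem_univ _) one_pos hder
  have hg : ⟪gradient f a, b - a⟫ = fderiv ℝ f a (b - a) := by
    rw [← toDual_gradient, InnerProductSpace.toDual_apply_apply]
  simp [slope_def_field, -map_sub] at h
  linarith

lemma gradient_comp_sub {E : Type*} [NormedAddCommGroup E] [InnerProductSpace ℝ E]
    [CompleteSpace E] (f : E → ℝ) (x y : E) :
    gradient (fun z => f (z - y)) x = gradient f (x - y) := by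
  simp only [gradient, fderiv_comp_sub]

/-- The recursion satisfied by the optimality gaps `h`, with `A = C * (1 + ζ)`, forces the rate
`2 * A / (k + 2)` from index `1` on. -/
lemma gap_le_of_recursion {h : ℕ → ℝ} {A : ℝ} (hA : 0 ≤ A)
    (hrec : ∀ k : ℕ, h (k + 1) ≤ k / (k + 2) * h k + 2 * A / (k + 2) ^ 2) :
    ∀ k : ℕ, 1 ≤ k → h k ≤ 2 * A / (k + 2) := by
  intro k hk
  induction k, hk using Nat.le_induction with
  | base =>
    have := hrec 0
    norm_num at this ⊢
    linarith
  | succ k _ ih =>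
    calc h (k + 1) ≤ k / (k + 2) * h k + 2 * A / (k + 2) ^ 2 := hrec k
      _ ≤ k / (k + 2) * (2 * A / (k + 2)) + 2 * A / (k + 2) ^ 2 := by gcongr
      _ = 2 * A * ((k + 1) / (k + 2) ^ 2) := by field_simp
      _ ≤ 2 * A * (1 / (k + 3)) := by
        refine mul_le_mul_of_nonneg_left ?_ (by positivity)
        rw [div_le_div_iff₀ (by positivity) (by positivity)]
        nlinarith
      _ = 2 * A / ((k + 1 : ℕ) + 2) := by push_cast; ring

/-- Convergence of ADCG for the sparse inverse problem over measures:
with approximate linear minimization (precision `Cζ/(k+2)`) and improvement steps that do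
at least as well as the conditional gradient tentative update,
`ℓ(Φμ_k − y) − ℓ⋆ ≤ 2C(1+ζ)/(k+2)` for all `k ≥ 1`. -/
theorem stmt_13 {Θ : Type*} [MetricSpace Θ] [CompactSpace Θ] [Nonempty Θ]
    [MeasurableSpace Θ] [BorelSpace Θ]
    (d : ℕ) (ψ : Θ → EuclideanSpace ℝ (Fin d)) (hψ : Continuous ψ)
    (ℓ : EuclideanSpace ℝ (Fin d) → ℝ)
    (hconv : ConvexOn ℝ Set.univ ℓ) (hdiff : Differentiable ℝ ℓ)
    (y : EuclideanSpace ℝ (Fin d)) (τ : ℝ) (hτ : 0 < τ)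
    (K : Set (EuclideanSpace ℝ (Fin d)))
    (hK : K = τ • convexHull ℝ (Set.range ψ ∪ {0}))
    (C : ℝ) (hC : 0 ≤ C)
    (hcurv : ∀ x ∈ K, ∀ s ∈ K, ∀ γ ∈ Set.Icc (0 : ℝ) 1,
      ℓ (x + γ • (s - x) - y) ≤
        ℓ (x - y) + γ * ⟪gradient (fun z => ℓ (z - y)) x, s - x⟫ + γ ^ 2 / 2 * C)
    (lstar : ℝ)
    (hlstar : IsLeast {r : ℝ | ∃ μ : Measure Θ, IsFiniteMeasure μ ∧
        μ Set.univ ≤ ENNReal.ofReal τ ∧ r = ℓ ((∫ θ, ψ θ ∂μ) - y)} lstar)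
    (ζ : ℝ) (hζ : 0 ≤ ζ)
    (μ : ℕ → Measure Θ) (hμ_fin : ∀ k, IsFiniteMeasure (μ k))
    (hμ_mass : ∀ k, (μ k) Set.univ ≤ ENNReal.ofReal τ)
    (s : ℕ → EuclideanSpace ℝ (Fin d)) (hs : ∀ k, s k ∈ K)
    (g : ℕ → EuclideanSpace ℝ (Fin d))
    (hg : ∀ k, g k = gradient ℓ ((∫ θ, ψ θ ∂(μ k)) - y))
    (hlmo : ∀ k, ∀ s' ∈ K, ⟪s k, g k⟫ ≤ ⟪s', g k⟫ + C * ζ / (k + 2))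
    (himp : ∀ k : ℕ, ℓ ((∫ θ, ψ θ ∂(μ (k + 1))) - y) ≤
      ℓ (((k : ℝ) / (k + 2)) • (∫ θ, ψ θ ∂(μ k)) + ((2 : ℝ) / (k + 2)) • s k - y)) :
    ∀ k : ℕ, 1 ≤ k → ℓ ((∫ θ, ψ θ ∂(μ k)) - y) - lstar ≤ 2 * C * (1 + ζ) / (k + 2) := by
  have hmem : ∀ ν : Measure Θ, IsFiniteMeasure ν → ν Set.univ ≤ ENNReal.ofReal τ →
      ∫ θ, ψ θ ∂ν ∈ K := by
    intro ν _ hν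
    rw [hK]
    exact integral_mem_smul_convexHull hψ hτ ν hν
  obtain ⟨⟨ν, hν_fin, hν_mass, hν⟩, -⟩ := hlstar
  have hopt := hmem ν hν_fin hν_mass
  have hrate := gap_le_of_recursion (h := fun k => ℓ ((∫ θ, ψ θ ∂(μ k)) - y) - lstar)
    (A := C * (1 + ζ)) (by positivity) ?_
  · simpa only [mul_assoc] using hrate
  intro k
  have hx := hmem (μ k) (hμ_fin k) (hμ_mass k)
  have himpk := himp k
  have hlmok := hlmo k _ hopt
  have hgk := hg k
  have hk : (0 : ℝ) < k + 2 := by positivity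
  have hcurvk := hcurv _ hx _ (hs k) (2 / (k + 2))
    ⟨by positivity, (div_le_one hk).2 (by linarith [(Nat.cast_nonneg k : (0 : ℝ) ≤ k)])⟩
  have hgrad := hconv.add_inner_gradient_le (hdiff _) (a := (∫ θ, ψ θ ∂(μ k)) - y)
    ((∫ θ, ψ θ ∂ν) - y)
  rw [gradient_comp_sub, ← hgk] at hcurvk
  rw [← hgk, ← hν, sub_sub_sub_cancel_right] at hgrad
  generalize (∫ θ, ψ θ ∂(μ k)) = x at *
  generalize (∫ θ, ψ θ ∂ν) = xopt at *
  have hpoint : ((k : ℝ) / (k + 2)) • x + ((2 : ℝ) / (k + 2)) • s k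
      = x + ((2 : ℝ) / (k + 2)) • (s k - x) := by
    have : (k : ℝ) / (k + 2) = 1 - 2 / (k + 2) := by field_simp; ring
    rw [this]
    module
  rw [hpoint] at himpk
  -- The linearized decrease is controlled by the gap, up to the tolerance of the oracle.
  have hdir : ⟪g k, s k - x⟫ ≤ lstar - ℓ (x - y) + C * ζ / (k + 2) := by
    rw [inner_sub_right] at hgrad ⊢
    rw [real_inner_comm, real_inner_comm (g k) xopt] at hlmok
    linarith
  have hstep := mul_le_mul_of_nonneg_left hdir (by positivity : (0 : ℝ) ≤ 2 / (k + 2))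
  calc _ ≤ ℓ (x - y) + 2 / (k + 2) * (lstar - ℓ (x - y) + C * ζ / (k + 2))
        + (2 / (k + 2)) ^ 2 / 2 * C - lstar := by linarith
    _ = _ := by field_simp; ring
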